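/- Assume the element setup. Let e_p ∈ E_p, e_q ∈ E_q, u_p ∈ B_p, u* ∈ B_p*, and set f_p := (−1)^{r₁} d_pq e_q + (−1)^{r₁+q} (1/2) T_p(Q(tr_q e_q)) + (−1)^{r₁+q} T_p u* and f_q := d_qp e_p + (−1)^p (1/2) T_q(tr_p e_p) + (−1)^p T_q u_p. Then for every ν_p ∈ E_p and ν_q ∈ E_q: ⟨ν_p | f_p⟩_p = −⟨e_q | d_qp ν_p⟩_q + (−1)^{p+1} (1/2) Q(tr_q e_q)(tr_p ν_p) + (−1)^p u*(tr_p ν_p), and ⟨ν_q | f_q⟩_q = (−1)^p ⟨d_pq ν_q | e_p⟩ₚʳᵉᵛ + (−1)^{p+1} (1/2) Q(tr_q ν_q)(tr_p e_p) + (−1)^p Q(tr_q ν_q)(u_p). -/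

import Mathlib

/-- Integer powers of `-1` are their own inverses. -/
lemma neg_one_zpow_mul_self_real (k : ℤ) : (-1 : ℝ) ^ k * (-1 : ℝ) ^ k = 1 := by
  rw [← mul_zpow]
  norm_num

/-- Integer powers of `-1` depend only on the parity of the exponent. -/
lemma neg_one_zpow_congr_real {k l : ℤ} (m : ℤ) (h : k = l + (m + m)) :
    (-1 : ℝ) ^ k = (-1 : ℝ) ^ l := by
  have h₀ : (-1 : ℝ) ≠ 0 := by norm_num
  rw [h, zpow_add₀ h₀, zpow_add₀ h₀, neg_one_zpow_mul_self_real, mul_one]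

/-- Lemma (integration-by-parts reformulation) for the generalized Stokes-Dirac structure:
given `f_p` and `f_q` defined from `e_p, e_q, u_p, u*` by the Dirac-structure relations,
the stated identities hold for all test elements `ν_p ∈ E_p` and `ν_q ∈ E_q`. -/
theorem stokes_dirac_int_by_parts
    (n p q : ℤ) (hpq : p + q = n + 1)
    {E_p F_p E_q F_q B_p B_q : Type*}
    [AddCommGroup E_p] [Module ℝ E_p] [FiniteDimensional ℝ E_p]
    [AddCommGroup F_p] [Module ℝ F_p] [FiniteDimensional ℝ F_p]
    [AddCommGroup E_q] [Module ℝ E_q] [FiniteDimensional ℝ E_q]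
    [AddCommGroup F_q] [Module ℝ F_q] [FiniteDimensional ℝ F_q]
    [AddCommGroup B_p] [Module ℝ B_p] [FiniteDimensional ℝ B_p]
    [AddCommGroup B_q] [Module ℝ B_q] [FiniteDimensional ℝ B_q]
    (pairP : E_p →ₗ[ℝ] F_p →ₗ[ℝ] ℝ)
    (hP₁ : ∀ e : E_p, (∀ f : F_p, pairP e f = 0) → e = 0)
    (hP₂ : ∀ f : F_p, (∀ e : E_p, pairP e f = 0) → f = 0)
    (pairQ : E_q →ₗ[ℝ] F_q →ₗ[ℝ] ℝ)
    (hQ₁ : ∀ e : E_q, (∀ f : F_q, pairQ e f = 0) → e = 0)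
    (hQ₂ : ∀ f : F_q, (∀ e : E_q, pairQ e f = 0) → f = 0)
    (dpq : E_q →ₗ[ℝ] F_p) (dqp : E_p →ₗ[ℝ] F_q)
    (trp : E_p →ₗ[ℝ] B_p) (trq : E_q →ₗ[ℝ] B_q)
    (Q : B_q →ₗ[ℝ] Module.Dual ℝ B_p)
    (hibp : ∀ (w : E_q) (v : E_p),
      (-1 : ℝ) ^ (p * (n - p)) * pairP v (dpq w)
        = (-1 : ℝ) ^ p * pairQ w (dqp v) + Q (trq w) (trp v))
    (T_p : Module.Dual ℝ B_p →ₗ[ℝ] F_p)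
    (hTp : ∀ (v : E_p) (l : Module.Dual ℝ B_p),
      pairP v (T_p l) = (-1 : ℝ) ^ ((p - 1) * (q - 1)) * l (trp v))
    (T_q : B_p →ₗ[ℝ] F_q)
    (hTq : ∀ (w : E_q) (u : B_p), pairQ w (T_q u) = Q (trq w) u)
    (e_p : E_p) (e_q : E_q) (u_p : B_p) (ustar : Module.Dual ℝ B_p)
    (f_p : F_p) (f_q : F_q)
    (hfp : f_p = ((-1 : ℝ) ^ (p * q + 1)) • dpq e_q
        + (((-1 : ℝ) ^ (p * q + 1 + q)) * (1 / 2)) • T_p (Q (trq e_q))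
        + ((-1 : ℝ) ^ (p * q + 1 + q)) • T_p ustar)
    (hfq : f_q = dqp e_p + (((-1 : ℝ) ^ p) * (1 / 2)) • T_q (trp e_p)
        + ((-1 : ℝ) ^ p) • T_q u_p) :
    (∀ ν_p : E_p,
      pairP ν_p f_p = -(pairQ e_q (dqp ν_p))
        + (-1 : ℝ) ^ (p + 1) * (1 / 2) * Q (trq e_q) (trp ν_p)
        + (-1 : ℝ) ^ p * ustar (trp ν_p)) ∧
    (∀ ν_q : E_q,
      pairQ ν_q f_q
        = (-1 : ℝ) ^ p * ((-1 : ℝ) ^ (p * (n - p)) * pairP e_p (dpq ν_q))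
        + (-1 : ℝ) ^ (p + 1) * (1 / 2) * Q (trq ν_q) (trp e_p)
        + (-1 : ℝ) ^ p * Q (trq ν_q) u_p) := by
  have h₀ : (-1 : ℝ) ≠ 0 := by norm_num
  have hn : n = p + q - 1 := by omega
  have hrev : (-1 : ℝ) ^ (p * (n - p)) = (-1) ^ (p * q) * (-1) ^ p := by
    rw [← zpow_add₀ h₀]
    exact neg_one_zpow_congr_real (-p) (by rw [hn]; ring)
  have htr : (-1 : ℝ) ^ ((p - 1) * (q - 1)) = (-1) ^ (p * q) * (-1) ^ p * (-1) ^ q * (-1) := by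
    rw [← zpow_add₀ h₀, ← zpow_add₀ h₀, ← zpow_add_one₀ h₀]
    exact neg_one_zpow_congr_real (-p - q) (by ring)
  have hp := neg_one_zpow_mul_self_real p
  have hq := neg_one_zpow_mul_self_real q
  have hpq' := neg_one_zpow_mul_self_real (p * q)
  simp only [hrev] at hibp ⊢
  simp only [htr] at hTp
  subst hfp hfq
  simp only [map_add, map_smul, smul_eq_mul, hTp, hTq, zpow_add₀ h₀, zpow_one]
  generalize (-1 : ℝ) ^ (p * q) = c at *
  generalize (-1 : ℝ) ^ p = a at *
  generalize (-1 : ℝ) ^ q = b at *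
  refine ⟨fun ν_p => ?_, fun ν_q => ?_⟩
  · have h := hibp e_q ν_p
    generalize pairP ν_p (dpq e_q) = x at *
    generalize pairQ e_q (dqp ν_p) = y at *
    generalize Q (trq e_q) (trp ν_p) = z at *
    generalize ustar (trp ν_p) = t at *
    linear_combination (-a) * h + (c * x - y) * hp
      + (a * z / 2 + a * t) * (b * b * hpq' + hq)
  · linear_combination (-a) * hibp ν_q e_p - pairQ ν_q (dqp e_p) * hp
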